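/- arXiv:1606.00770 — 2 statements merged into one kernel-verified Lean document; each statement's English description precedes it below -/
import Mathlib

section
/- Let f(x) = x_1 x_3 + x_2 x_4 where (x_1,x_2,x_3,x_4) is jointly normal with mean (0,0,μ_3,μ_4) and covariance matrix block-diagonal with blocks [[σ_1^2, σ_{12}],[σ_{12}, σ_2^2]] and [[σ_3^2, σ_{34}],[σ_{34}, σ_4^2]]. Then Var(f) = σ_1^2(σ_3^2+μ_3^2) + σ_2^2(σ_4^2+μ_4^2) + 2σ_{12}(σ_{34}+μ_3μ_4), and the main effect indices of x_3 and x_4 are zero: Var(E[f|x_3]) = Var(E[f|x_4]) = 0. -/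
open MeasureTheory ProbabilityTheory

/-!
Uncorrelated blocks of a Gaussian vector are independent, so `f = ∑ i, U i * V i` with `U` centred
and independent of `V`. The covariance of `U i * V i` and `U j * V j` is then a polynomial in the
means and covariances of `U` and of `V`, which gives the variance of `f`. Conditioning on any
information `m` about `V` pulls the mean of `U` out, `E[f | m] = ∑ i, E[U i] E[V i | m] = 0`, so all
the main effects of `V` vanish.
-/

section IndependentProducts

variable {Ω : Type*} {m m₁ m₂ mΩ : MeasurableSpace Ω} {P : Measure Ω}

lemma memLp_mul_of_indepFun {p : ENNReal} {U V : Ω → ℝ} (hU : MemLp U p P) (hV : MemLp V p P)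
    (hUV : IndepFun U V P) : MemLp (U * V) p P := by
  have hmeas : AEStronglyMeasurable (U * V) P := hU.1.mul hV.1
  rcases eq_or_ne p 0 with rfl | hp
  · exact memLp_zero_iff_aestronglyMeasurable.2 hmeas
  rcases eq_or_ne p ⊤ with rfl | hp'
  · exact hV.mul hU
  rw [← integrable_norm_rpow_iff hmeas hp hp']
  have hnorm : IndepFun (fun ω => ‖U ω‖ ^ p.toReal) (fun ω => ‖V ω‖ ^ p.toReal) P :=
    hUV.comp (φ := fun x : ℝ => ‖x‖ ^ p.toReal) (ψ := fun x : ℝ => ‖x‖ ^ p.toReal)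
      (by fun_prop) (by fun_prop)
  refine (hnorm.integrable_mul (hU.integrable_norm_rpow hp hp')
    (hV.integrable_norm_rpow hp hp')).congr (.of_forall fun ω => ?_)
  simp only [Pi.mul_apply, norm_mul]
  rw [Real.mul_rpow (norm_nonneg _) (norm_nonneg _)]

lemma covariance_mul_mul_of_indepFun [IsProbabilityMeasure P] {U U' V V' : Ω → ℝ}
    (hU : MemLp U 2 P) (hU' : MemLp U' 2 P) (hV : MemLp V 2 P) (hV' : MemLp V' 2 P)
    (hindep : IndepFun (fun ω => (U ω, U' ω)) (fun ω => (V ω, V' ω)) P) :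
    cov[U * V, U' * V'; P] = cov[U, U'; P] * cov[V, V'; P]
      + cov[U, U'; P] * (P[V] * P[V']) + P[U] * P[U'] * cov[V, V'; P] := by
  have hUV : IndepFun U V P := hindep.comp measurable_fst measurable_fst
  have hUV' : IndepFun U' V' P := hindep.comp measurable_snd measurable_snd
  have hprod : IndepFun (U * U') (V * V') P :=
    hindep.comp (measurable_fst.mul measurable_snd) (measurable_fst.mul measurable_snd)
  have hsecond : P[U * V * (U' * V')] = P[U * U'] * P[V * V'] := by
    rw [mul_mul_mul_comm,
      hprod.integral_mul_eq_mul_integral (hU.1.mul hU'.1) (hV.1.mul hV'.1)]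
  rw [covariance_eq_sub (memLp_mul_of_indepFun hU hV hUV) (memLp_mul_of_indepFun hU' hV' hUV'),
    hsecond, hUV.integral_mul_eq_mul_integral hU.1 hV.1,
    hUV'.integral_mul_eq_mul_integral hU'.1 hV'.1, covariance_eq_sub hU hU',
    covariance_eq_sub hV hV']
  ring

lemma variance_sum_mul_of_indepFun [IsProbabilityMeasure P] {ι : Type*} [Fintype ι]
    {U V : ι → Ω → ℝ} (hU : ∀ i, MemLp (U i) 2 P) (hV : ∀ i, MemLp (V i) 2 P)
    (hindep : IndepFun (fun ω i => U i ω) (fun ω i => V i ω) P) :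
    Var[∑ i, U i * V i; P] = ∑ i, ∑ j, (cov[U i, U j; P] * cov[V i, V j; P]
      + cov[U i, U j; P] * (P[V i] * P[V j]) + P[U i] * P[U j] * cov[V i, V j; P]) := by
  have hpair (i j : ι) : Measurable fun x : ι → ℝ => (x i, x j) := by fun_prop
  rw [variance_sum fun i => memLp_mul_of_indepFun (hU i) (hV i)
    (hindep.comp (measurable_pi_apply i) (measurable_pi_apply i))]
  exact Finset.sum_congr rfl fun i _ => Finset.sum_congr rfl fun j _ =>
    covariance_mul_mul_of_indepFun (hU i) (hU j) (hV i) (hV j)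
      (hindep.comp (hpair i j) (hpair i j))

lemma condExp_mul_ae_eq_of_indep [IsFiniteMeasure P] {U V : Ω → ℝ}
    (hm : m ≤ m₂) (hm₁ : m₁ ≤ mΩ) (hm₂ : m₂ ≤ mΩ) (hU : StronglyMeasurable[m₁] U)
    (hV : StronglyMeasurable[m₂] V) (hUint : Integrable U P) (hVint : Integrable V P)
    (hindep : Indep m₁ m₂ P) :
    P[U * V | m] =ᵐ[P] P[U] • P[V | m] := by
  have hUV : IndepFun U V P := (IndepFun_iff_Indep U V P).2 <|
    indep_of_indep_of_le hindep hU.measurable.comap_le hV.measurable.comap_le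
  have hinner : P[U * V | m₂] =ᵐ[P] P[U] • V := by
    filter_upwards [condExp_mul_of_stronglyMeasurable_right hV (hUV.integrable_mul hUint hVint)
      hUint, condExp_indep_eq hm₁ hm₂ hU hindep] with ω hpull hconst
    rw [hpull, Pi.mul_apply, hconst, Pi.smul_apply, smul_eq_mul]
  calc P[U * V | m]
    _ =ᵐ[P] P[P[U * V | m₂] | m] := (condExp_condExp_of_le hm hm₂).symm
    _ =ᵐ[P] P[(∫ ω, U ω ∂P) • V | m] := condExp_congr_ae hinner
    _ =ᵐ[P] (∫ ω, U ω ∂P) • P[V | m] := condExp_smul _ V m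

lemma condExp_sum_mul_ae_eq_of_indepFun [IsFiniteMeasure P] {ι : Type*} [Fintype ι]
    {U V : ι → Ω → ℝ} (hU : ∀ i, Measurable (U i)) (hV : ∀ i, Measurable (V i))
    (hUint : ∀ i, Integrable (U i) P) (hVint : ∀ i, Integrable (V i) P)
    (hindep : IndepFun (fun ω i => U i ω) (fun ω i => V i ω) P)
    (hm : m ≤ MeasurableSpace.comap (fun ω i => V i ω) inferInstance) :
    P[∑ i, U i * V i | m] =ᵐ[P] ∑ i, P[U i] • P[V i | m] := by
  have hcoord (W : ι → Ω → ℝ) (i : ι) :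
      StronglyMeasurable[MeasurableSpace.comap (fun ω i => W i ω) inferInstance] (W i) :=
    ((measurable_pi_apply i).comp (comap_measurable fun ω i => W i ω)).stronglyMeasurable
  have hint (i : ι) : Integrable (U i * V i) P :=
    (hindep.comp (measurable_pi_apply i) (measurable_pi_apply i)).integrable_mul (hUint i)
      (hVint i)
  refine (condExp_finsetSum (fun i _ => hint i) m).trans ?_
  refine eventuallyEq_sum fun i _ => ?_
  exact condExp_mul_ae_eq_of_indep hm (measurable_pi_lambda _ hU).comap_le
    (measurable_pi_lambda _ hV).comap_le (hcoord U i) (hcoord V i) (hUint i) (hVint i)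
    ((IndepFun_iff_Indep _ _ P).1 hindep)

end IndependentProducts

section GaussianLinearCombinations

variable {Ω ι : Type*} {mΩ : MeasurableSpace Ω} {P : Measure Ω} {X : ι → Ω → ℝ}

lemma indepFun_comp_of_hasGaussianLaw_of_covariance_eq_zero [Finite ι] {κ κ' : Type*} [Finite κ]
    [Finite κ'] (hX : HasGaussianLaw (fun ω => (X · ω)) P) (a : κ → ι) (b : κ' → ι)
    (hcov : ∀ i j, cov[X (a i), X (b j); P] = 0) :
    IndepFun (fun ω i => X (a i) ω) (fun ω j => X (b j) ω) P := by
  have := Fintype.ofFinite ι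
  have := Fintype.ofFinite κ
  have := Fintype.ofFinite κ'
  exact HasGaussianLaw.indepFun_of_covariance_eval (hX.map_fun
    (.prod (.pi fun i : κ => .proj (a i)) (.pi fun j : κ' => .proj (b j)))) hcov

variable [Fintype ι] {m : ι → ℝ} {C : Matrix ι ι ℝ}

lemma hasGaussianLaw_of_map_sum_eq_gaussianReal
    (h : ∀ c : ι → ℝ, ∃ a v, P.map (fun ω => ∑ i, c i * X i ω) = gaussianReal a v) :
    HasGaussianLaw (fun ω => (X · ω)) P where
  isGaussian_map := by
    classical
    have hsum (c : ι → ℝ) : AEMeasurable (fun ω => ∑ i, c i * X i ω) P := by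
      obtain ⟨a, v, hav⟩ := h c
      exact .of_map_ne_zero (hav ▸ IsProbabilityMeasure.ne_zero _)
    have hX (i : ι) : AEMeasurable (X i) P := by
      simpa [Pi.single_apply] using hsum (Pi.single i 1)
    refine isGaussian_of_map_eq_gaussianReal fun L => ?_
    obtain ⟨a, v, hav⟩ := h fun i => L fun j => if i = j then 1 else 0
    refine ⟨a, v, ?_⟩
    rw [AEMeasurable.map_map_of_aemeasurable (by fun_prop) (aemeasurable_pi_lambda _ hX), ← hav]
    congr 1
    ext ω
    simpa [mul_comm] using L.toLinearMap.pi_apply_eq_sum_univ (X · ω)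

lemma map_eq_gaussianReal_of_map_sum_eq_gaussianReal
    (h : ∀ c : ι → ℝ, P.map (fun ω => ∑ i, c i * X i ω)
      = gaussianReal (∑ i, c i * m i) (∑ i, ∑ j, c i * c j * C i j).toNNReal) (i : ι) :
    P.map (X i) = gaussianReal (m i) (C i i).toNNReal := by
  classical
  simpa [Pi.single_apply] using h (Pi.single i 1)

lemma integral_eq_of_map_eq_gaussianReal {Y : Ω → ℝ} {a : ℝ} {v : NNReal}
    (hY : P.map Y = gaussianReal a v) : P[Y] = a := by
  have hmeas : AEMeasurable Y P := .of_map_ne_zero (hY ▸ IsProbabilityMeasure.ne_zero _)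
  rw [← integral_id_gaussianReal (μ := a) (v := v), ← hY]
  exact (integral_map hmeas aestronglyMeasurable_id).symm

lemma variance_eq_of_map_eq_gaussianReal {Y : Ω → ℝ} {a : ℝ} {v : NNReal}
    (hY : P.map Y = gaussianReal a v) : Var[Y; P] = v := by
  have hmeas : AEMeasurable Y P := .of_map_ne_zero (hY ▸ IsProbabilityMeasure.ne_zero _)
  rw [← variance_id_map hmeas, hY, variance_id_gaussianReal]

lemma covariance_eq_of_map_sum_eq_gaussianReal (hsymm : C.IsSymm) (hdiag : ∀ i, 0 ≤ C i i)
    (h : ∀ c : ι → ℝ, P.map (fun ω => ∑ i, c i * X i ω)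
      = gaussianReal (∑ i, c i * m i) (∑ i, ∑ j, c i * c j * C i j).toNNReal) (i j : ι) :
    cov[X i, X j; P] = C i j := by
  classical
  have hX := hasGaussianLaw_of_map_sum_eq_gaussianReal fun c => ⟨_, _, h c⟩
  have := hX.isProbabilityMeasure
  have hL2 (k : ι) : MemLp (X k) 2 P := (hX.eval k).memLp_two
  have hself (k : ι) : Var[X k; P] = C k k := by
    rw [variance_eq_of_map_eq_gaussianReal (map_eq_gaussianReal_of_map_sum_eq_gaussianReal h k),
      Real.coe_toNNReal _ (hdiag k)]
  -- `C` is not assumed positive semidefinite, so `toNNReal` leaves only an inequality; its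
  -- instances for `X i + X j` and `X i - X j` squeeze the covariance.
  have hle (s : ℝ) : C i i + 2 * s * C i j + s ^ 2 * C j j
      ≤ C i i + 2 * s * cov[X i, X j; P] + s ^ 2 * C j j := by
    have hvar := variance_eq_of_map_eq_gaussianReal (h (Pi.single i 1 + Pi.single j s))
    simp only [Pi.add_apply, Pi.single_apply, add_mul, mul_add, ite_mul, mul_ite, one_mul,
      zero_mul, mul_one, mul_zero, Finset.sum_add_distrib, Finset.sum_ite_eq', Finset.mem_univ,
      if_true] at hvar
    rw [variance_fun_add (hL2 i) ((hL2 j).const_mul s), variance_const_mul,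
      covariance_const_mul_right, hself, hself, hsymm.apply i j] at hvar
    linarith [Real.le_coe_toNNReal (C i i + s * C i j + (s * C i j + s * s * C j j))]
  linarith [hle 1, hle (-1)]

end GaussianLinearCombinations

theorem dependent_gaussian_model_variances_general {Ω ι : Type*} [Fintype ι]
    {mΩ : MeasurableSpace Ω} {P : Measure Ω} [IsProbabilityMeasure P] {U V : ι → Ω → ℝ}
    (hU : ∀ i, Measurable (U i)) (hV : ∀ i, Measurable (V i))
    (hU2 : ∀ i, MemLp (U i) 2 P) (hV2 : ∀ i, MemLp (V i) 2 P)
    (hindep : IndepFun (fun ω i => U i ω) (fun ω i => V i ω) P) (hmean : ∀ i, P[U i] = 0) :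
    Var[∑ i, U i * V i; P]
        = ∑ i, ∑ j, cov[U i, U j; P] * (cov[V i, V j; P] + P[V i] * P[V j]) ∧
    ∀ m ≤ MeasurableSpace.comap (fun ω i => V i ω) inferInstance,
      P[∑ i, U i * V i | m] =ᵐ[P] 0 := by
  constructor
  · rw [variance_sum_mul_of_indepFun hU2 hV2 hindep]
    simp only [hmean, zero_mul, add_zero, mul_add]
  · intro m hm
    simpa only [hmean, zero_smul, Finset.sum_const_zero] using
      condExp_sum_mul_ae_eq_of_indepFun hU hV (fun i => (hU2 i).integrable one_le_two)
        (fun i => (hV2 i).integrable one_le_two) hindep hm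

/-- For `f(x) = x₁x₃ + x₂x₄` with `(x₁,x₂,x₃,x₄)` jointly normal of mean `(0,0,μ₃,μ₄)`
and block-diagonal covariance with blocks `[[σ₁²,σ₁₂],[σ₁₂,σ₂²]]` and
`[[σ₃²,σ₃₄],[σ₃₄,σ₄²]]` (joint normality encoded by all linear combinations being
normal), we have
`Var(f) = σ₁²(σ₃²+μ₃²) + σ₂²(σ₄²+μ₄²) + 2σ₁₂(σ₃₄+μ₃μ₄)` and the main effect partial
variances of `x₃` and `x₄` vanish: `Var(E[f|x₃]) = Var(E[f|x₄]) = 0`. -/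
theorem dependent_gaussian_model_variances
    {Ω : Type*} [MeasurableSpace Ω] (P : Measure Ω) [IsProbabilityMeasure P]
    (X : Fin 4 → Ω → ℝ) (hX : ∀ i, Measurable (X i))
    (μ3 μ4 σ1 σ2 σ3 σ4 σ12 σ34 : ℝ)
    (m : Fin 4 → ℝ) (hm : m = ![0, 0, μ3, μ4])
    (C : Matrix (Fin 4) (Fin 4) ℝ)
    (hC : C = !![σ1 ^ 2, σ12, 0, 0; σ12, σ2 ^ 2, 0, 0;
                 0, 0, σ3 ^ 2, σ34; 0, 0, σ34, σ4 ^ 2])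
    (hgauss : ∀ c : Fin 4 → ℝ,
      Measure.map (fun ω => ∑ i, c i * X i ω) P
        = gaussianReal (∑ i, c i * m i) (∑ i, ∑ j, c i * c j * C i j).toNNReal)
    (f : Ω → ℝ) (hf : f = fun ω => X 0 ω * X 2 ω + X 1 ω * X 3 ω) :
    variance f P
        = σ1 ^ 2 * (σ3 ^ 2 + μ3 ^ 2) + σ2 ^ 2 * (σ4 ^ 2 + μ4 ^ 2)
            + 2 * σ12 * (σ34 + μ3 * μ4) ∧
    variance (P[f | MeasurableSpace.comap (X 2) inferInstance]) P = 0 ∧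
    variance (P[f | MeasurableSpace.comap (X 3) inferInstance]) P = 0 := by
  have hG := hasGaussianLaw_of_map_sum_eq_gaussianReal fun c => ⟨_, _, hgauss c⟩
  have hL2 (i : Fin 4) : MemLp (X i) 2 P := (hG.eval i).memLp_two
  have hmean (i : Fin 4) : P[X i] = m i :=
    integral_eq_of_map_eq_gaussianReal (map_eq_gaussianReal_of_map_sum_eq_gaussianReal hgauss i)
  have hsymm : C.IsSymm := by subst hC; ext i j; fin_cases i <;> fin_cases j <;> rfl
  have hdiag (i : Fin 4) : 0 ≤ C i i := by subst hC; fin_cases i <;> simp [sq_nonneg]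
  have hcov := covariance_eq_of_map_sum_eq_gaussianReal hsymm hdiag hgauss
  have hindep := indepFun_comp_of_hasGaussianLaw_of_covariance_eq_zero hG ![0, 1] ![2, 3]
    fun i j => by rw [hcov, hC]; fin_cases i <;> fin_cases j <;> rfl
  obtain ⟨hvar, hcond⟩ := dependent_gaussian_model_variances_general (fun _ => hX _)
    (fun _ => hX _) (fun _ => hL2 _) (fun _ => hL2 _) hindep
    fun i => by rw [hmean, hm]; fin_cases i <;> rfl
  have hsum : f = ∑ i, X (![0, 1] i) * X (![2, 3] i) := by rw [hf, Fin.sum_univ_two]; rfl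
  have hmain (k : Fin 2) :
      Var[P[f | MeasurableSpace.comap (X (![2, 3] k)) inferInstance]; P] = 0 := by
    rw [hsum, variance_congr (hcond _ ?_), variance_zero]
    exact ((measurable_pi_apply k).comp (comap_measurable fun ω i => X (![2, 3] i) ω)).comap_le
  refine ⟨?_, hmain 0, hmain 1⟩
  rw [hsum, hvar]
  simp only [Fin.sum_univ_two, hcov, hmean, hm, hC, Matrix.of_apply, Matrix.cons_val',
    Matrix.cons_val_fin_one, Matrix.cons_val_zero, Matrix.cons_val_one, Matrix.cons_val]
  ring
end

section
/- Let f(x) = x_1 + x_2 + x_3 where (x_1,x_2,x_3) is jointly normal with zero mean and covariance matrix [[1,0,0],[0,1,ρσ],[0,ρσ,σ^2]]. Then Var(f) = 2 + σ^2 + 2ρσ, and the main effect Sobol' indices are S_1 = 1/(2+σ^2+2ρσ), S_2 = (1+ρσ)^2/(2+σ^2+2ρσ), S_3 = (ρ+σ)^2/(2+σ^2+2ρσ), while the total indices are S_1^{tot} = 1/(2+σ^2+2ρσ), S_2^{tot} = (1−ρ^2)/(2+σ^2+2ρσ), S_3^{tot} = σ^2(1−ρ^2)/(2+σ^2+2ρσ).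 -/
open MeasureTheory ProbabilityTheory

/-!
A Gaussian vector is determined up to translation by its covariances, and jointly Gaussian variables
are independent as soon as they are uncorrelated. Hence if `ℓ ∘ Z` solves the normal equations of
the regression of `f` on `Z`, the residual `f - ℓ ∘ Z` is independent of `Z`, so that `E[f | Z]` is
`ℓ ∘ Z` up to a constant and `Var (E[f | Z]) = Cov (ℓ ∘ Z, f)`. This gives the main effects, and by
the law of total variance the total effects too, from a solution of a linear system in the
covariances: the weights are `E[x₃ | x₂] = ρσ x₂` and `E[x₂ | x₃] = (ρ/σ) x₃`, up to the terms of
`f` that are themselves conditioned on.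
-/

section ConditionalExpectation

variable {Ω E : Type*} {mΩ : MeasurableSpace Ω} {P : Measure Ω} [IsProbabilityMeasure P]
  {f : Ω → ℝ}

lemma integral_sq_sub_condExp {m : MeasurableSpace Ω} (hm : m ≤ mΩ) (hf : MemLp f 2 P) :
    ∫ ω, (f ω - (P[f | m]) ω) ^ 2 ∂P = Var[f; P] - Var[P[f | m]; P] := by
  have hcond : ∫ ω, (Var[f; P | m]) ω ∂P = ∫ ω, (f ω - (P[f | m]) ω) ^ 2 ∂P :=
    integral_condExp hm
  rw [← hcond, ← integral_condVar_add_variance_condExp hm hf, add_sub_cancel_right]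

lemma condExp_comap_ae_eq_of_indepFun_sub [mE : MeasurableSpace E] {Z : Ω → E} {g : E → ℝ}
    (hZ : Measurable Z) (hf : Measurable f) (hg : Measurable g) (hf_int : Integrable f P)
    (hg_int : Integrable (fun ω ↦ g (Z ω)) P) (hind : IndepFun Z (fun ω ↦ f ω - g (Z ω)) P) :
    P[f | mE.comap Z] =ᵐ[P] fun ω ↦ g (Z ω) + ∫ ω, f ω - g (Z ω) ∂P := by
  have hres : Measurable fun ω ↦ f ω - g (Z ω) := hf.sub (hg.comp hZ)
  have hgZ : P[fun ω ↦ g (Z ω) | mE.comap Z] = fun ω ↦ g (Z ω) :=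
    condExp_of_stronglyMeasurable hZ.comap_le
      (hg.comp (comap_measurable Z)).stronglyMeasurable hg_int
  have hresZ : P[fun ω ↦ f ω - g (Z ω) | mE.comap Z] =ᵐ[P] fun _ ↦ ∫ ω, f ω - g (Z ω) ∂P :=
    condExp_indep_eq hres.comap_le hZ.comap_le (comap_measurable _).stronglyMeasurable hind.symm
  have hsplit : f = (fun ω ↦ g (Z ω)) + fun ω ↦ f ω - g (Z ω) := by ext; simp
  calc P[f | mE.comap Z]
    _ =ᵐ[P] P[fun ω ↦ g (Z ω) | mE.comap Z] + P[fun ω ↦ f ω - g (Z ω) | mE.comap Z] := by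
      conv_lhs => rw [hsplit]
      exact condExp_add hg_int (hf_int.sub hg_int) _
    _ =ᵐ[P] fun ω ↦ g (Z ω) + ∫ ω, f ω - g (Z ω) ∂P := by
      filter_upwards [hresZ] with ω hω
      rw [Pi.add_apply, hgZ, hω]

end ConditionalExpectation

lemma covariance_mul_add_mul_left {Ω : Type*} [MeasurableSpace Ω] {P : Measure Ω}
    [IsFiniteMeasure P] {X Y Z : Ω → ℝ} (hX : MemLp X 2 P) (hY : MemLp Y 2 P) (hZ : MemLp Z 2 P)
    (a b : ℝ) :
    cov[fun ω ↦ a * X ω + b * Y ω, Z; P] = a * cov[X, Z; P] + b * cov[Y, Z; P] := by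
  rw [← covariance_const_mul_left, ← covariance_const_mul_left]
  exact covariance_add_left (hX.const_mul a) (hY.const_mul b) hZ

/-- The normal equations of the linear regression of `f` on the random vector `Z`: the residual
`f - ℓ ∘ Z` is uncorrelated with every continuous linear functional of `Z`. They are stated as an
equality of covariances, in which form they are a linear system for the coefficients of `ℓ`. -/
def IsLinearRegression {Ω E : Type*} [MeasurableSpace Ω] [NormedAddCommGroup E] [NormedSpace ℝ E]
    (ℓ : StrongDual ℝ E) (Z : Ω → E) (f : Ω → ℝ) (P : Measure Ω) : Prop :=
  ∀ L : StrongDual ℝ E,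
    cov[fun ω ↦ L (Z ω), f; P] = cov[fun ω ↦ L (Z ω), fun ω ↦ ℓ (Z ω); P]

namespace IsLinearRegression

variable {Ω : Type*} [MeasurableSpace Ω] {P : Measure Ω} {f : Ω → ℝ}

section Gaussian

variable {E : Type*} [NormedAddCommGroup E] [NormedSpace ℝ E] [CompleteSpace E]
  [SecondCountableTopology E] [mE : MeasurableSpace E] [BorelSpace E] {Z : Ω → E}
  {ℓ : StrongDual ℝ E}

lemma indepFun_sub (hℓ : IsLinearRegression ℓ Z f P)
    (hlaw : HasGaussianLaw (fun ω ↦ (Z ω, f ω)) P) :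
    IndepFun Z (fun ω ↦ f ω - ℓ (Z ω)) P := by
  have := hlaw.isProbabilityMeasure
  have hlaw_sub : HasGaussianLaw (fun ω ↦ (Z ω, f ω - ℓ (Z ω))) P :=
    hlaw.map_fun ((ContinuousLinearMap.fst ℝ E ℝ).prod
      (ContinuousLinearMap.snd ℝ E ℝ - ℓ ∘L ContinuousLinearMap.fst ℝ E ℝ))
  refine hlaw_sub.indepFun_of_covariance_strongDual fun L M ↦ ?_
  have hM : M ∘ (fun ω ↦ f ω - ℓ (Z ω)) = fun ω ↦ (f ω - ℓ (Z ω)) * M 1 := by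
    ext ω
    simpa using M.map_smul (f ω - ℓ (Z ω)) 1
  have huncorr : cov[L ∘ Z, fun ω ↦ f ω - ℓ (Z ω); P] = 0 := by
    rw [covariance_fun_sub_right (hlaw.fst.map L).memLp_two hlaw.snd.memLp_two
      (hlaw.fst.map_fun ℓ).memLp_two]
    exact sub_eq_zero.2 (hℓ L)
  rw [hM, covariance_mul_const_right, huncorr, zero_mul]

lemma condExp_comap_ae_eq (hℓ : IsLinearRegression ℓ Z f P) (hZ : Measurable Z)
    (hf : Measurable f) (hlaw : HasGaussianLaw (fun ω ↦ (Z ω, f ω)) P) :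
    P[f | mE.comap Z] =ᵐ[P] fun ω ↦ ℓ (Z ω) + ∫ ω, f ω - ℓ (Z ω) ∂P :=
  have := hlaw.isProbabilityMeasure
  condExp_comap_ae_eq_of_indepFun_sub hZ hf ℓ.measurable hlaw.snd.integrable
    (hlaw.fst.map_fun ℓ).integrable (hℓ.indepFun_sub hlaw)

lemma variance_condExp_comap (hℓ : IsLinearRegression ℓ Z f P) (hZ : Measurable Z)
    (hf : Measurable f) (hlaw : HasGaussianLaw (fun ω ↦ (Z ω, f ω)) P) :
    Var[P[f | mE.comap Z]; P] = cov[fun ω ↦ ℓ (Z ω), f; P] := by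
  have := hlaw.isProbabilityMeasure
  have hmeas : Measurable fun ω ↦ ℓ (Z ω) := ℓ.measurable.comp hZ
  rw [variance_congr (hℓ.condExp_comap_ae_eq hZ hf hlaw),
    variance_add_const hmeas.aestronglyMeasurable, hℓ ℓ, covariance_self hmeas.aemeasurable]

end Gaussian

variable {Y Z : Ω → ℝ} {a b : ℝ}

lemma smul_id (hYf : cov[Y, f; P] = a * cov[Y, Y; P]) :
    IsLinearRegression (a • ContinuousLinearMap.id ℝ ℝ) Y f P := by
  intro L
  have hL : (fun ω ↦ L (Y ω)) = fun ω ↦ L 1 * Y ω := by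
    ext ω
    simpa [mul_comm] using L.map_smul (Y ω) 1
  have hscale : cov[Y, fun ω ↦ (a • ContinuousLinearMap.id ℝ ℝ) (Y ω); P] = cov[Y, f; P] := by
    rw [hYf]
    exact covariance_const_mul_right a
  rw [hL, covariance_const_mul_left, covariance_const_mul_left, hscale]

lemma smul_fst_add_smul_snd [IsFiniteMeasure P] (hY : MemLp Y 2 P) (hZ : MemLp Z 2 P)
    (hf : MemLp f 2 P) (hYf : cov[Y, f; P] = a * cov[Y, Y; P] + b * cov[Y, Z; P])
    (hZf : cov[Z, f; P] = a * cov[Z, Y; P] + b * cov[Z, Z; P]) :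
    IsLinearRegression (a • ContinuousLinearMap.fst ℝ ℝ ℝ + b • ContinuousLinearMap.snd ℝ ℝ ℝ)
      (fun ω ↦ (Y ω, Z ω)) f P := by
  intro L
  have hL : (fun ω ↦ L (Y ω, Z ω)) = fun ω ↦ L (1, 0) * Y ω + L (0, 1) * Z ω := by
    ext ω
    rw [mul_comm, mul_comm (L (0, 1)), ← smul_eq_mul, ← smul_eq_mul, ← L.map_smul, ← L.map_smul,
      ← L.map_add]
    simp
  have hcomb : ∀ W : Ω → ℝ, MemLp W 2 P → cov[W, fun ω ↦ a * Y ω + b * Z ω; P]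
      = a * cov[W, Y; P] + b * cov[W, Z; P] := by
    intro W hW
    rw [covariance_comm, covariance_mul_add_mul_left hY hZ hW, covariance_comm Y,
      covariance_comm Z]
  rw [hL, covariance_mul_add_mul_left hY hZ hf, hYf, hZf, ← hcomb Y hY, ← hcomb Z hZ]
  exact (covariance_mul_add_mul_left hY hZ ((hY.const_mul a).add (hZ.const_mul b)) _ _).symm

end IsLinearRegression

section GaussianFamily

variable {Ω ι : Type*} [MeasurableSpace Ω] [Fintype ι] {P : Measure Ω} {X : ι → Ω → ℝ}

lemma hasGaussianLaw_of_forall_map_sum_mul (hX : ∀ i, AEMeasurable (X i) P)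
    (h : ∀ c : ι → ℝ, ∃ m v, P.map (fun ω ↦ ∑ i, c i * X i ω) = gaussianReal m v) :
    HasGaussianLaw (fun ω i ↦ X i ω) P := by
  classical
  refine ⟨isGaussian_of_map_eq_gaussianReal fun L ↦ ?_⟩
  obtain ⟨m, v, hmv⟩ := h fun i ↦ L fun j ↦ if i = j then 1 else 0
  refine ⟨m, v, ?_⟩
  rw [AEMeasurable.map_map_of_aemeasurable (by fun_prop) (aemeasurable_pi_lambda _ hX), ← hmv]
  congr 1
  ext ω
  simpa [mul_comm] using L.toLinearMap.pi_apply_eq_sum_univ fun i ↦ X i ω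

lemma covariance_eq_of_forall_variance_sum_mul [IsFiniteMeasure P] (hX : ∀ i, MemLp (X i) 2 P)
    {C : Matrix ι ι ℝ} (hC : C.IsSymm)
    (hvar : ∀ c : ι → ℝ, Var[fun ω ↦ ∑ i, c i * X i ω; P] = ∑ i, ∑ j, c i * c j * C i j)
    (i j : ι) :
    cov[X i, X j; P] = C i j := by
  classical
  have hi : Var[X i; P] = C i i := by simpa [Pi.single_apply] using hvar (Pi.single i 1)
  have hj : Var[X j; P] = C j j := by simpa [Pi.single_apply] using hvar (Pi.single j 1)
  have hij := hvar (Pi.single i 1 + Pi.single j 1)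
  simp only [Pi.add_apply, Pi.single_apply, add_mul, mul_add, ite_mul, mul_ite, one_mul, mul_one,
    zero_mul, mul_zero, Finset.sum_add_distrib, Finset.sum_ite_eq', Finset.mem_univ, if_true] at hij
  linarith [variance_fun_add (hX i) (hX j), hC.apply i j]

lemma covariance_eq_of_forall_map_sum_mul (hX : ∀ i, AEMeasurable (X i) P)
    {C : Matrix ι ι ℝ} (hC : C.PosSemidef) {m : (ι → ℝ) → ℝ}
    (hgauss : ∀ c : ι → ℝ, P.map (fun ω ↦ ∑ i, c i * X i ω)
      = gaussianReal (m c) (∑ i, ∑ j, c i * c j * C i j).toNNReal) (i j : ι) :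
    cov[X i, X j; P] = C i j := by
  have hlaw := hasGaussianLaw_of_forall_map_sum_mul hX fun c ↦ ⟨_, _, hgauss c⟩
  have := hlaw.isProbabilityMeasure
  refine covariance_eq_of_forall_variance_sum_mul (fun k ↦ (hlaw.eval k).memLp_two)
    (by simpa using hC.isHermitian) (fun c ↦ ?_) i j
  have hnonneg : 0 ≤ ∑ i, ∑ j, c i * c j * C i j := by
    simpa only [star_trivial, dotProduct, Matrix.mulVec, Finset.mul_sum, mul_comm (C _ _) (c _),
      mul_assoc] using hC.dotProduct_mulVec_nonneg c
  have hc : HasLaw (fun ω ↦ ∑ i, c i * X i ω) _ P := ⟨by fun_prop, hgauss c⟩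
  rw [hc.variance_eq, variance_id_gaussianReal, Real.coe_toNNReal _ hnonneg]

lemma variance_condExp_sum_comap_eval (hX : ∀ i, Measurable (X i))
    (hlaw : HasGaussianLaw (fun ω i ↦ X i ω) P) (i : ι) {a : ℝ}
    (hi : ∑ k, cov[X i, X k; P] = a * cov[X i, X i; P]) :
    Var[P[fun ω ↦ ∑ k, X k ω | MeasurableSpace.comap (X i) inferInstance]; P]
      = a * ∑ k, cov[X i, X k; P] := by
  have := hlaw.isProbabilityMeasure
  have hX₂ := fun k ↦ (hlaw.eval k).memLp_two
  rw [← covariance_fun_sum_right hX₂ (hX₂ i)] at hi ⊢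
  have hjoint : HasGaussianLaw (fun ω ↦ (X i ω, ∑ k, X k ω)) P := by
    simpa using hlaw.map_fun ((ContinuousLinearMap.proj i).prod (∑ k, .proj k))
  rw [(IsLinearRegression.smul_id hi).variance_condExp_comap (hX i) (by fun_prop) hjoint]
  exact covariance_const_mul_left a

lemma variance_condExp_sum_comap_prodMk (hX : ∀ i, Measurable (X i))
    (hlaw : HasGaussianLaw (fun ω i ↦ X i ω) P) (i j : ι) {a b : ℝ}
    (hi : ∑ k, cov[X i, X k; P] = a * cov[X i, X i; P] + b * cov[X i, X j; P])
    (hj : ∑ k, cov[X j, X k; P] = a * cov[X j, X i; P] + b * cov[X j, X j; P]) :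
    Var[P[fun ω ↦ ∑ k, X k ω | MeasurableSpace.comap (fun ω ↦ (X i ω, X j ω)) inferInstance]; P]
      = a * ∑ k, cov[X i, X k; P] + b * ∑ k, cov[X j, X k; P] := by
  have := hlaw.isProbabilityMeasure
  have hX₂ := fun k ↦ (hlaw.eval k).memLp_two
  have hsum₂ : MemLp (fun ω ↦ ∑ k, X k ω) 2 P := hlaw.fun_sum.memLp_two
  rw [← covariance_fun_sum_right hX₂ (hX₂ i)] at hi ⊢
  rw [← covariance_fun_sum_right hX₂ (hX₂ j)] at hj ⊢
  have hjoint : HasGaussianLaw (fun ω ↦ ((X i ω, X j ω), ∑ k, X k ω)) P := by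
    simpa using hlaw.map_fun
      (((ContinuousLinearMap.proj i).prod (.proj j)).prod (∑ k, .proj k))
  rw [(IsLinearRegression.smul_fst_add_smul_snd (hX₂ i) (hX₂ j) hsum₂ hi hj).variance_condExp_comap
    ((hX i).prodMk (hX j)) (by fun_prop) hjoint]
  exact covariance_mul_add_mul_left (hX₂ i) (hX₂ j) hsum₂ a b

end GaussianFamily

lemma posSemidef_covariance_of_abs_le_one {ρ : ℝ} (hρ : |ρ| ≤ 1) (σ : ℝ) :
    (!![1, 0, 0; 0, 1, ρ * σ; 0, ρ * σ, σ ^ 2] : Matrix (Fin 3) (Fin 3) ℝ).PosSemidef := by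
  have hcholesky : (!![1, 0, 0; 0, 1, ρ * σ; 0, ρ * σ, σ ^ 2] : Matrix (Fin 3) (Fin 3) ℝ)
      = !![1, 0, 0; 0, 1, ρ * σ; 0, 0, σ * √(1 - ρ ^ 2)].conjTranspose
        * !![1, 0, 0; 0, 1, ρ * σ; 0, 0, σ * √(1 - ρ ^ 2)] := by
    have hsqrt : √(1 - ρ ^ 2) ^ 2 = 1 - ρ ^ 2 :=
      Real.sq_sqrt (sub_nonneg.2 ((sq_le_one_iff_abs_le_one ρ).2 hρ))
    have hentry : ρ * σ * (ρ * σ) + σ * √(1 - ρ ^ 2) * (σ * √(1 - ρ ^ 2)) = σ ^ 2 := by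
      linear_combination σ ^ 2 * hsqrt
    ext i j
    fin_cases i <;> fin_cases j <;> simp [Matrix.mul_apply, Fin.sum_univ_three, hentry]
  rw [hcholesky]
  exact Matrix.posSemidef_conjTranspose_mul_self _

theorem dependent_gaussian_linear_model_indices_general
    {Ω : Type*} [MeasurableSpace Ω] (P : Measure Ω)
    (X : Fin 3 → Ω → ℝ) (hX : ∀ i, Measurable (X i))
    (ρ σ : ℝ) (hσ : σ ≠ 0)
    (C : Matrix (Fin 3) (Fin 3) ℝ)
    (hC : C = !![1, 0, 0; 0, 1, ρ * σ; 0, ρ * σ, σ ^ 2])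
    (hlaw : HasGaussianLaw (fun ω i ↦ X i ω) P) (hcov : ∀ i j, cov[X i, X j; P] = C i j)
    (f : Ω → ℝ) (hf : f = fun ω ↦ X 0 ω + X 1 ω + X 2 ω) :
    variance f P = 2 + σ ^ 2 + 2 * ρ * σ ∧
    variance (P[f | MeasurableSpace.comap (X 0) inferInstance]) P / variance f P
      = 1 / (2 + σ ^ 2 + 2 * ρ * σ) ∧
    variance (P[f | MeasurableSpace.comap (X 1) inferInstance]) P / variance f P
      = (1 + ρ * σ) ^ 2 / (2 + σ ^ 2 + 2 * ρ * σ) ∧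
    variance (P[f | MeasurableSpace.comap (X 2) inferInstance]) P / variance f P
      = (ρ + σ) ^ 2 / (2 + σ ^ 2 + 2 * ρ * σ) ∧
    (∫ ω, (f ω - (P[f | MeasurableSpace.comap (fun ω => (X 1 ω, X 2 ω)) inferInstance]) ω) ^ 2 ∂P)
        / variance f P
      = 1 / (2 + σ ^ 2 + 2 * ρ * σ) ∧
    (∫ ω, (f ω - (P[f | MeasurableSpace.comap (fun ω => (X 0 ω, X 2 ω)) inferInstance]) ω) ^ 2 ∂P)
        / variance f P
      = (1 - ρ ^ 2) / (2 + σ ^ 2 + 2 * ρ * σ) ∧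
    (∫ ω, (f ω - (P[f | MeasurableSpace.comap (fun ω => (X 0 ω, X 1 ω)) inferInstance]) ω) ^ 2 ∂P)
        / variance f P
      = σ ^ 2 * (1 - ρ ^ 2) / (2 + σ ^ 2 + 2 * ρ * σ) := by
  have := hlaw.isProbabilityMeasure
  obtain rfl : f = fun ω ↦ ∑ k, X k ω := by simpa only [Fin.sum_univ_three] using hf
  have hX₂ := fun k ↦ (hlaw.eval k).memLp_two
  have hrow₀ : ∑ k, cov[X 0, X k; P] = 1 := by simp [hcov, hC, Fin.sum_univ_three]
  have hrow₁ : ∑ k, cov[X 1, X k; P] = 1 + ρ * σ := by simp [hcov, hC, Fin.sum_univ_three]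
  have hrow₂ : ∑ k, cov[X 2, X k; P] = ρ * σ + σ ^ 2 := by simp [hcov, hC, Fin.sum_univ_three]
  have hrow₂_eq : ρ * σ + σ ^ 2 = (1 + ρ / σ) * σ ^ 2 := by field_simp; ring
  have hvar : Var[fun ω ↦ ∑ k, X k ω; P] = 2 + σ ^ 2 + 2 * ρ * σ := by
    rw [variance_fun_sum hX₂, Fin.sum_univ_three, hrow₀, hrow₁, hrow₂]
    ring
  have hf₂ : MemLp (fun ω ↦ ∑ k, X k ω) 2 P := hlaw.fun_sum.memLp_two
  have hpair : ∀ i j, Measurable fun ω ↦ (X i ω, X j ω) := fun i j ↦ (hX i).prodMk (hX j)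
  refine ⟨hvar, ?_, ?_, ?_, ?_, ?_, ?_⟩ <;> rw [hvar] <;> congr 1
  · rw [variance_condExp_sum_comap_eval hX hlaw 0 (a := 1) (by rw [hrow₀]; simp [hcov, hC]), hrow₀,
      one_mul]
  · rw [variance_condExp_sum_comap_eval hX hlaw 1 (a := 1 + ρ * σ) (by rw [hrow₁]; simp [hcov, hC]),
      hrow₁, sq]
  · rw [variance_condExp_sum_comap_eval hX hlaw 2 (a := 1 + ρ / σ)
      (by rw [hrow₂, hrow₂_eq]; simp [hcov, hC]), hrow₂]
    field_simp
    ring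
  · rw [integral_sq_sub_condExp (hpair 1 2).comap_le hf₂, hvar,
      variance_condExp_sum_comap_prodMk hX hlaw 1 2 (a := 1) (b := 1)
        (by rw [hrow₁]; simp [hcov, hC]) (by rw [hrow₂]; simp [hcov, hC]), hrow₁, hrow₂]
    ring
  · rw [integral_sq_sub_condExp (hpair 0 2).comap_le hf₂, hvar,
      variance_condExp_sum_comap_prodMk hX hlaw 0 2 (a := 1) (b := 1 + ρ / σ)
        (by rw [hrow₀]; simp [hcov, hC]) (by rw [hrow₂, hrow₂_eq]; simp [hcov, hC]), hrow₀, hrow₂]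
    field_simp
    ring
  · rw [integral_sq_sub_condExp (hpair 0 1).comap_le hf₂, hvar,
      variance_condExp_sum_comap_prodMk hX hlaw 0 1 (a := 1) (b := 1 + ρ * σ)
        (by rw [hrow₀]; simp [hcov, hC]) (by rw [hrow₁]; simp [hcov, hC]), hrow₀, hrow₁]
    ring

/-- For the linear model `f(x) = x₁ + x₂ + x₃` with `(x₁,x₂,x₃)` jointly normal of
zero mean and covariance `[[1,0,0],[0,1,ρσ],[0,ρσ,σ²]]`:
`Var(f) = 2 + σ² + 2ρσ`, the main effect Sobol' indices are
`S₁ = 1/(2+σ²+2ρσ)`, `S₂ = (1+ρσ)²/(2+σ²+2ρσ)`, `S₃ = (ρ+σ)²/(2+σ²+2ρσ)`, and the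
total indices are `S₁ᵗᵒᵗ = 1/(2+σ²+2ρσ)`, `S₂ᵗᵒᵗ = (1−ρ²)/(2+σ²+2ρσ)`,
`S₃ᵗᵒᵗ = σ²(1−ρ²)/(2+σ²+2ρσ)`. -/
theorem dependent_gaussian_linear_model_indices
    {Ω : Type*} [MeasurableSpace Ω] (P : Measure Ω) [IsProbabilityMeasure P]
    (X : Fin 3 → Ω → ℝ) (hX : ∀ i, Measurable (X i))
    (ρ σ : ℝ) (hρ : |ρ| ≤ 1) (hσ : 0 < σ) (hD : 0 < 2 + σ ^ 2 + 2 * ρ * σ)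
    (C : Matrix (Fin 3) (Fin 3) ℝ)
    (hC : C = !![1, 0, 0; 0, 1, ρ * σ; 0, ρ * σ, σ ^ 2])
    (hgauss : ∀ c : Fin 3 → ℝ,
      Measure.map (fun ω => ∑ i, c i * X i ω) P
        = gaussianReal 0 (∑ i, ∑ j, c i * c j * C i j).toNNReal)
    (f : Ω → ℝ) (hf : f = fun ω => X 0 ω + X 1 ω + X 2 ω) :
    variance f P = 2 + σ ^ 2 + 2 * ρ * σ ∧
    variance (P[f | MeasurableSpace.comap (X 0) inferInstance]) P / variance f P
      = 1 / (2 + σ ^ 2 + 2 * ρ * σ) ∧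
    variance (P[f | MeasurableSpace.comap (X 1) inferInstance]) P / variance f P
      = (1 + ρ * σ) ^ 2 / (2 + σ ^ 2 + 2 * ρ * σ) ∧
    variance (P[f | MeasurableSpace.comap (X 2) inferInstance]) P / variance f P
      = (ρ + σ) ^ 2 / (2 + σ ^ 2 + 2 * ρ * σ) ∧
    (∫ ω, (f ω - (P[f | MeasurableSpace.comap (fun ω => (X 1 ω, X 2 ω)) inferInstance]) ω) ^ 2 ∂P)
        / variance f P
      = 1 / (2 + σ ^ 2 + 2 * ρ * σ) ∧
    (∫ ω, (f ω - (P[f | MeasurableSpace.comap (fun ω => (X 0 ω, X 2 ω)) inferInstance]) ω) ^ 2 ∂P)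
        / variance f P
      = (1 - ρ ^ 2) / (2 + σ ^ 2 + 2 * ρ * σ) ∧
    (∫ ω, (f ω - (P[f | MeasurableSpace.comap (fun ω => (X 0 ω, X 1 ω)) inferInstance]) ω) ^ 2 ∂P)
        / variance f P
      = σ ^ 2 * (1 - ρ ^ 2) / (2 + σ ^ 2 + 2 * ρ * σ) := by
  exact dependent_gaussian_linear_model_indices_general P X hX ρ σ hσ.ne' C hC
    (hasGaussianLaw_of_forall_map_sum_mul (fun i ↦ (hX i).aemeasurable) fun c ↦ ⟨_, _, hgauss c⟩)
    (covariance_eq_of_forall_map_sum_mul (fun i ↦ (hX i).aemeasurable)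
      (hC ▸ posSemidef_covariance_of_abs_le_one hρ σ) hgauss) f hf
end
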